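/- arXiv:1804.03084 — 3 statements merged into one kernel-verified Lean document; each statement's English description precedes it below -/
import Mathlib

section
/- Let r, s ≥ 1 and n ≥ 0 be integers. Let P : ℂ^{2^r} → ℂ^{2^r} and Q : ℂ^{2^s} → ℂ^{2^s} be idempotent linear maps whose ranges equal the complex spans of {v_α^{⊗r} : α ∈ ℝ} and {v_β^{⊗s} : β ∈ ℝ} respectively. Then for any two linear maps f, g : ℂ^{2^{r+s}} → ℂ^{2^n}, one has (∀ α, β ∈ ℝ, f(v_α^{⊗r} ⊗ v_β^{⊗s}) = g(v_α^{⊗r} ⊗ v_β^{⊗s})) if and only if f ∘ (P ⊗ Q) = g ∘ (P ⊗ Q). -/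
open Complex Matrix Kronecker

/-- The `r`-fold tensor power of `v_α = (1, e^{iα})`, as a vector in
`(ℂ²)^{⊗r} ≅ ℂ^{2^r}` indexed by bit-strings `x : Fin r → Fin 2`; its coordinate
at `x` is `e^{i·|x|·α}` where `|x|` is the Hamming weight of `x`. -/
noncomputable def vpow (r : ℕ) (α : ℝ) : (Fin r → Fin 2) → ℂ :=
  fun x => Complex.exp (((∑ i, ((x i : ℕ) : ℂ))) * (α : ℂ) * Complex.I)

/-- `v_α^{⊗r} ⊗ v_β^{⊗s}`, under the identification
`ℂ^{2^r} ⊗ ℂ^{2^s} ≅ ℂ^{2^{r+s}}` (indexing by pairs of bit-strings). -/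
noncomputable def vpow2 (r s : ℕ) (α β : ℝ) :
    (Fin r → Fin 2) × (Fin s → Fin 2) → ℂ :=
  fun p => vpow r α p.1 * vpow s β p.2

/- Two linear maps agree after precomposition with `P ⊗ Q` exactly when they agree on the range of
`P ⊗ Q`. This range is spanned by the columns of `P ⊗ Q`, which are the tensor products of columns
of `P` and `Q`; by bilinearity it is therefore also spanned by the tensor products `a i ⊗ b j` of
any families spanning the ranges of `P` and `Q`. -/

section VecKronecker

variable {R l m n m' n' ι κ : Type*} [CommSemiring R]

/-- The Kronecker product of vectors as a bilinear map; as for matrices, the coordinates of the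
product are indexed by pairs. -/
def vecKronecker : (m → R) →ₗ[R] (n → R) →ₗ[R] (m × n → R) :=
  LinearMap.mk₂ R (fun u w p ↦ u p.1 * w p.2)
    (fun _ _ _ ↦ funext fun _ ↦ add_mul _ _ _)
    (fun _ _ _ ↦ funext fun _ ↦ mul_assoc _ _ _)
    (fun _ _ _ ↦ funext fun _ ↦ mul_add _ _ _)
    (fun _ _ _ ↦ funext fun _ ↦ mul_left_comm _ _ _)

theorem mul_eq_mul_iff_eqOn_range_mulVecLin [Fintype m] [Fintype n]
    (A B : Matrix l m R) (E : Matrix m n R) :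
    A * E = B * E ↔ Set.EqOn A.mulVecLin B.mulVecLin (LinearMap.range E.mulVecLin) := by
  simp only [ext_iff_mulVec, ← mulVec_mulVec, LinearMap.coe_range, Set.eqOn_range, funext_iff,
    Function.comp_apply, mulVecLin_apply]

theorem range_col_kronecker (P : Matrix m m' R) (Q : Matrix n n' R) :
    Set.range (P ⊗ₖ Q).col =
      Set.image2 (fun u w ↦ vecKronecker u w) (Set.range P.col) (Set.range Q.col) := by
  rw [Set.image2_range]
  rfl

theorem range_mulVecLin_kronecker [Fintype m'] [Fintype n']
    (P : Matrix m m' R) (Q : Matrix n n' R) :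
    LinearMap.range (P ⊗ₖ Q).mulVecLin =
      Submodule.map₂ vecKronecker (LinearMap.range P.mulVecLin) (LinearMap.range Q.mulVecLin) := by
  simp only [range_mulVecLin, Submodule.map₂_span_span, range_col_kronecker]

theorem eq_on_vpow2_iff_comp_kronecker_projectors_eq_general
    [Fintype m] [Fintype n] [Fintype m'] [Fintype n']
    {P : Matrix m m' R} {Q : Matrix n n' R} {a : ι → m → R} {b : κ → n → R}
    (hP : LinearMap.range P.mulVecLin = Submodule.span R (Set.range a))
    (hQ : LinearMap.range Q.mulVecLin = Submodule.span R (Set.range b))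
    (f g : Matrix l (m × n) R) :
    (∀ i j, f *ᵥ vecKronecker (a i) (b j) = g *ᵥ vecKronecker (a i) (b j)) ↔
      f * (P ⊗ₖ Q) = g * (P ⊗ₖ Q) := by
  have hPQ : LinearMap.range (P ⊗ₖ Q).mulVecLin =
      Submodule.span R (Set.range fun p : ι × κ ↦ vecKronecker (a p.1) (b p.2)) := by
    rw [range_mulVecLin_kronecker, hP, hQ, Submodule.map₂_span_span, Set.image2_range]
  rw [mul_eq_mul_iff_eqOn_range_mulVecLin, hPQ, LinearMap.eqOn_span_iff, Set.eqOn_range]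
  simp only [funext_iff, Prod.forall, Function.comp_apply, mulVecLin_apply]

end VecKronecker

theorem eq_on_vpow2_iff_comp_kronecker_projectors_eq (r s n : ℕ)
    (hr : 1 ≤ r) (hs : 1 ≤ s)
    (P : Matrix (Fin r → Fin 2) (Fin r → Fin 2) ℂ)
    (Q : Matrix (Fin s → Fin 2) (Fin s → Fin 2) ℂ)
    (hP : P * P = P) (hQ : Q * Q = Q)
    (hPrange : LinearMap.range P.mulVecLin = Submodule.span ℂ (Set.range (vpow r)))
    (hQrange : LinearMap.range Q.mulVecLin = Submodule.span ℂ (Set.range (vpow s)))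
    (f g : Matrix (Fin n → Fin 2) ((Fin r → Fin 2) × (Fin s → Fin 2)) ℂ) :
    (∀ α β : ℝ, f.mulVec (vpow2 r s α β) = g.mulVec (vpow2 r s α β)) ↔
      f * (P ⊗ₖ Q) = g * (P ⊗ₖ Q) :=
  eq_on_vpow2_iff_comp_kronecker_projectors_eq_general hPrange hQrange f g
end

section
/- For all n, m ∈ ℕ, every matrix obtained from the generator matrices of the π-fragment of the ΔZX-calculus by finitely many Kronecker products and matrix compositions lies in ⋃_{k∈ℕ} (1/√2)^k · M_{2^m × 2^n}(ℤ), i.e. is an integer matrix multiplied by a nonnegative integer power of 1/√2. -/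
open Complex Matrix Kronecker

/-- Kronecker product of matrices of sizes `2^a × 2^b` and `2^c × 2^d`,
reindexed as a `2^(a+c) × 2^(b+d)` matrix. -/
noncomputable def kron2 {a b c d : ℕ} (A : Matrix (Fin (2 ^ a)) (Fin (2 ^ b)) ℂ)
    (B : Matrix (Fin (2 ^ c)) (Fin (2 ^ d)) ℂ) :
    Matrix (Fin (2 ^ (a + c))) (Fin (2 ^ (b + d))) ℂ :=
  Matrix.reindex (finProdFinEquiv.trans (finCongr (pow_add 2 a c).symm))
    (finProdFinEquiv.trans (finCongr (pow_add 2 b d).symm)) (A ⊗ₖ B)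

/-- The Hadamard matrix `H = (1/√2)·[[1,1],[1,−1]]`. -/
noncomputable def Hmat : Matrix (Fin 2) (Fin 2) ℂ :=
  ((Real.sqrt 2 : ℝ) : ℂ)⁻¹ • !![1, 1; 1, -1]

/-- `H^{⊗n}`. -/
noncomputable def Hpow : (n : ℕ) → Matrix (Fin (2 ^ n)) (Fin (2 ^ n)) ℂ
  | 0 => 1
  | n + 1 => kron2 (Hpow n) Hmat

/-- The green spider `Z^{(n,m)}(α)`: the `2^m × 2^n` matrix whose `(0…0,0…0)` entry
is `1`, whose `(1…1,1…1)` entry is `e^{iα}` and whose other entries are `0`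
(for `n = m = 0` the two entries coincide, giving the `1×1` matrix `(1+e^{iα})`). -/
noncomputable def Zspider (n m : ℕ) (α : ℝ) : Matrix (Fin (2 ^ m)) (Fin (2 ^ n)) ℂ :=
  Matrix.of fun i j =>
    (if (i : ℕ) = 0 ∧ (j : ℕ) = 0 then 1 else 0) +
    (if (i : ℕ) = 2 ^ m - 1 ∧ (j : ℕ) = 2 ^ n - 1 then Complex.exp ((α : ℂ) * Complex.I) else 0)

/-- The family of matrices generated by the generator matrices of the π-fragment of
the ΔZX-calculus, closed under Kronecker product and matrix composition.
`ZXpi n m M` means that `M : ℂ^{2^n} → ℂ^{2^m}` is representable. -/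
inductive ZXpi : (n m : ℕ) → Matrix (Fin (2 ^ m)) (Fin (2 ^ n)) ℂ → Prop
  | green (n m : ℕ) (α : ℝ) (hα : α = 0 ∨ α = Real.pi) : ZXpi n m (Zspider n m α)
  | red (n m : ℕ) (α : ℝ) (hα : α = 0 ∨ α = Real.pi) :
      ZXpi n m (Hpow m * Zspider n m α * Hpow n)
  | had : ZXpi 1 1 Hmat
  | triangle : ZXpi 1 1 !![1, 1; 0, 1]
  | wire : ZXpi 1 1 (1 : Matrix (Fin (2 ^ 1)) (Fin (2 ^ 1)) ℂ)
  | swap : ZXpi 2 2 !![1, 0, 0, 0; 0, 0, 1, 0; 0, 1, 0, 0; 0, 0, 0, 1]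
  | cup : ZXpi 2 0 !![1, 0, 0, 1]
  | cap : ZXpi 0 2 !![1; 0; 0; 1]
  | empty : ZXpi 0 0 (1 : Matrix (Fin (2 ^ 0)) (Fin (2 ^ 0)) ℂ)
  | kron {n₁ m₁ n₂ m₂ : ℕ} {A : Matrix (Fin (2 ^ m₁)) (Fin (2 ^ n₁)) ℂ}
      {B : Matrix (Fin (2 ^ m₂)) (Fin (2 ^ n₂)) ℂ} :
      ZXpi n₁ m₁ A → ZXpi n₂ m₂ B → ZXpi (n₁ + n₂) (m₁ + m₂) (kron2 A B)
  | comp {a b c : ℕ} {A : Matrix (Fin (2 ^ c)) (Fin (2 ^ b)) ℂ}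
      {B : Matrix (Fin (2 ^ b)) (Fin (2 ^ a)) ℂ} :
      ZXpi b c A → ZXpi a b B → ZXpi a c (A * B)

/-!
Matrices of the form `cᵏ • A` with `A` integral are closed under matrix and Kronecker products,
because the exponents of `c` add. So it is enough to look at the generators: the phases `0` and `π`
put only `1` and `-1` into a green spider, and each Hadamard matrix costs one factor `1/√2`.
-/

/-- `M` is an integer matrix scaled by a power of `c`. For `c = 1/√2` this is membership in
`⋃ₖ (1/√2)ᵏ · M(ℤ)`. Rows and columns are indexed by arbitrary types, so that a Kronecker product
can be treated before it is reindexed by `Fin`. -/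
def IsScaledInt {ι κ R : Type*} [CommRing R] (c : R) (M : Matrix ι κ R) : Prop :=
  ∃ (k : ℕ) (A : Matrix ι κ ℤ), M = c ^ k • A.map (Int.castRingHom R)

namespace IsScaledInt

variable {ι κ μ ν R : Type*} [CommRing R] {c : R}

theorem of_mem_matrix {M : Matrix ι κ R} (hM : M ∈ (Set.range (Int.castRingHom R)).matrix) :
    IsScaledInt c M := by
  choose A hA using hM
  exact ⟨0, of A, by ext i j; simp [← hA]⟩

theorem one [DecidableEq ι] : IsScaledInt c (1 : Matrix ι ι R) :=
  ⟨0, 1, by simp⟩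

theorem mul [Fintype κ] {M : Matrix ι κ R} {N : Matrix κ μ R} (hM : IsScaledInt c M)
    (hN : IsScaledInt c N) : IsScaledInt c (M * N) := by
  obtain ⟨k, A, rfl⟩ := hM
  obtain ⟨l, B, rfl⟩ := hN
  exact ⟨k + l, A * B, by
    rw [Matrix.map_mul, Matrix.smul_mul, Matrix.mul_smul, smul_smul, pow_add]⟩

theorem kronecker {M : Matrix ι κ R} {N : Matrix μ ν R} (hM : IsScaledInt c M)
    (hN : IsScaledInt c N) : IsScaledInt c (M ⊗ₖ N) := by
  obtain ⟨k, A, rfl⟩ := hM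
  obtain ⟨l, B, rfl⟩ := hN
  refine ⟨k + l, A ⊗ₖ B, ?_⟩
  ext
  simp [pow_add, mul_mul_mul_comm]

theorem reindex {ι' κ' : Type*} {M : Matrix ι κ R} (hM : IsScaledInt c M) (e : ι ≃ ι')
    (f : κ ≃ κ') : IsScaledInt c (Matrix.reindex e f M) := by
  obtain ⟨k, A, rfl⟩ := hM
  exact ⟨k, Matrix.reindex e f A, rfl⟩

protected theorem kron2 {a b d e : ℕ} {c : ℂ} {M : Matrix (Fin (2 ^ a)) (Fin (2 ^ b)) ℂ}
    {N : Matrix (Fin (2 ^ d)) (Fin (2 ^ e)) ℂ} (hM : IsScaledInt c M) (hN : IsScaledInt c N) :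
    IsScaledInt c (kron2 M N) :=
  (hM.kronecker hN).reindex _ _

theorem triangle : IsScaledInt c !![1, 1; 0, 1] :=
  ⟨0, !![1, 1; 0, 1], by simp [← Matrix.ext_iff, Fin.forall_fin_succ]⟩

theorem swap : IsScaledInt c !![1, 0, 0, 0; 0, 0, 1, 0; 0, 1, 0, 0; 0, 0, 0, 1] :=
  ⟨0, !![1, 0, 0, 0; 0, 0, 1, 0; 0, 1, 0, 0; 0, 0, 0, 1],
    by simp [← Matrix.ext_iff, Fin.forall_fin_succ]⟩

theorem cup : IsScaledInt c !![1, 0, 0, 1] :=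
  ⟨0, !![1, 0, 0, 1], by simp [← Matrix.ext_iff, Fin.forall_fin_succ]⟩

theorem cap : IsScaledInt c !![1; 0; 0; 1] :=
  ⟨0, !![1; 0; 0; 1], by simp [← Matrix.ext_iff, Fin.forall_fin_succ]⟩

end IsScaledInt

theorem isScaledInt_hmat : IsScaledInt ((Real.sqrt 2 : ℝ) : ℂ)⁻¹ Hmat :=
  ⟨1, !![1, 1; 1, -1], by simp [Hmat, ← Matrix.ext_iff, Fin.forall_fin_two]⟩

theorem isScaledInt_hpow (n : ℕ) : IsScaledInt ((Real.sqrt 2 : ℝ) : ℂ)⁻¹ (Hpow n) := by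
  induction n with
  | zero => exact .one
  | succ n ih => exact ih.kron2 (d := 1) (e := 1) isScaledInt_hmat

theorem exp_mul_I_mem_range_castRingHom {α : ℝ} (hα : α = 0 ∨ α = Real.pi) :
    exp (α * I) ∈ Set.range (Int.castRingHom ℂ) := by
  rcases hα with rfl | rfl
  · exact ⟨1, by simp⟩
  · exact ⟨-1, by simp [exp_pi_mul_I]⟩

theorem zspider_mem_matrix {α : ℝ} (hα : exp (α * I) ∈ Set.range (Int.castRingHom ℂ)) (n m : ℕ) :
    Zspider n m α ∈ (Set.range (Int.castRingHom ℂ)).matrix := by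
  obtain ⟨z, hz⟩ := hα
  intro i j
  refine ⟨(if (i : ℕ) = 0 ∧ (j : ℕ) = 0 then 1 else 0) +
    (if (i : ℕ) = 2 ^ m - 1 ∧ (j : ℕ) = 2 ^ n - 1 then z else 0), ?_⟩
  simp [Zspider, ← hz]

theorem zxpi_subset_dyadic (n m : ℕ) (M : Matrix (Fin (2 ^ m)) (Fin (2 ^ n)) ℂ)
    (hM : ZXpi n m M) :
    ∃ (k : ℕ) (A : Matrix (Fin (2 ^ m)) (Fin (2 ^ n)) ℤ),
      M = (((Real.sqrt 2 : ℝ) : ℂ)⁻¹ ^ k) • A.map (fun z => (z : ℂ)) := by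
  change IsScaledInt ((Real.sqrt 2 : ℝ) : ℂ)⁻¹ M
  induction hM with
  | green n m α hα =>
    exact .of_mem_matrix (zspider_mem_matrix (exp_mul_I_mem_range_castRingHom hα) n m)
  | red n m α hα =>
    have hZ := zspider_mem_matrix (exp_mul_I_mem_range_castRingHom hα) n m
    exact ((isScaledInt_hpow m).mul (.of_mem_matrix hZ)).mul (isScaledInt_hpow n)
  | had => exact isScaledInt_hmat
  | triangle => exact .triangle
  | swap => exact .swap
  | cup => exact .cup
  | cap => exact .cap
  | wire | empty => exact .one
  | kron _ _ hA hB => exact hA.kron2 hB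
  | comp _ _ hA hB => exact hA.mul hB
end

section
/- For all n, m ∈ ℕ, every matrix M ∈ ⋃_{k∈ℕ} (1/√2)^k · M_{2^m × 2^n}(ℤ) — that is, every integer 2^m × 2^n matrix multiplied by a nonnegative integer power of 1/√2 — can be obtained from the generator matrices of the π-fragment of the ΔZX-calculus by finitely many Kronecker products and matrix compositions. Hence the matrices representable in this fragment are exactly ⋃_{k∈ℕ} (1/√2)^k · M_{2^m × 2^n}(ℤ). -/
open Complex Matrix Kronecker

/-!
Every generator is a power of `1/√2`, shared by all entries, times an integer matrix, and this shape
is preserved by Kronecker products and by composition.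

Conversely, attach to a function `v` on bit strings the matrix `∑ k d, v k ^ d • |k⟩⟨k d|`, which
puts the row vector `(1, v k)` on an extra bit, controlled by `k`. Merging two such bits with the
copy tensor multiplies the functions, since `(1, x) ⊗ (1, y)` is sent to `(1, xy)`; merging them
with the W tensor adds them, since it is sent to `(1, x + y)`. So the functions whose matrix is
representable form a ring. It contains the functions reading off a single bit, hence by induction on
the number of bits all integer-valued functions. Applied to the entries of an integer matrix `A`, as
a function of row and column, this gives `A` after summing over the spare row and column wires. The
scalar `1/√2 = ⟨0|H|1⟩` supplies the remaining factor.
-/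

/-- `M` is an integer matrix multiplied by a power of the scalar `s`. The power is shared by all
entries. -/
def IsScaledIntegral {R ι κ : Type*} [CommRing R] (s : R) (M : Matrix κ ι R) : Prop :=
  ∃ (k : ℕ) (A : Matrix κ ι ℤ), M = s ^ k • A.map (fun z => (z : R))

namespace IsScaledIntegral

variable {R ι κ l ι' κ' : Type*} [CommRing R] {s : R}

theorem map_intCast (A : Matrix κ ι ℤ) : IsScaledIntegral s (A.map fun z => (z : R)) :=
  ⟨0, A, by simp⟩

theorem one [DecidableEq ι] : IsScaledIntegral s (1 : Matrix ι ι R) := by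
  simpa using map_intCast (s := s) (1 : Matrix ι ι ℤ)

theorem mul [Fintype l] {A : Matrix κ l R} {B : Matrix l ι R}
    (hA : IsScaledIntegral s A) (hB : IsScaledIntegral s B) : IsScaledIntegral s (A * B) := by
  obtain ⟨a, A, rfl⟩ := hA
  obtain ⟨b, B, rfl⟩ := hB
  refine ⟨a + b, A * B, ?_⟩
  have map_mul : (A * B).map (fun z => (z : R)) =
      A.map (fun z => (z : R)) * B.map fun z => (z : R) := Matrix.map_mul (f := Int.castRingHom R)
  rw [map_mul, Matrix.smul_mul, Matrix.mul_smul, smul_smul, pow_add]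

theorem kronecker {A : Matrix κ ι R} {B : Matrix κ' ι' R}
    (hA : IsScaledIntegral s A) (hB : IsScaledIntegral s B) : IsScaledIntegral s (A ⊗ₖ B) := by
  obtain ⟨a, A, rfl⟩ := hA
  obtain ⟨b, B, rfl⟩ := hB
  refine ⟨a + b, A ⊗ₖ B, ?_⟩
  ext
  simp only [Matrix.kroneckerMap_apply, Matrix.smul_apply, Matrix.map_apply, smul_eq_mul, pow_add,
    Int.cast_mul]
  ring

theorem submatrix {M : Matrix κ ι R} (hM : IsScaledIntegral s M) (f : κ' → κ) (e : ι' → ι) :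
    IsScaledIntegral s (M.submatrix f e) := by
  obtain ⟨k, A, rfl⟩ := hM
  exact ⟨k, A.submatrix f e, rfl⟩

theorem kron2 {a b c d : ℕ} {s : ℂ} {A : Matrix (Fin (2 ^ a)) (Fin (2 ^ b)) ℂ}
    {B : Matrix (Fin (2 ^ c)) (Fin (2 ^ d)) ℂ} (hA : IsScaledIntegral s A)
    (hB : IsScaledIntegral s B) : IsScaledIntegral s (kron2 A B) :=
  (hA.kronecker hB).submatrix _ _

end IsScaledIntegral

/-- The scalar `1/√2`. -/
noncomputable def invSqrtTwo : ℂ := ((Real.sqrt 2 : ℝ) : ℂ)⁻¹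

theorem invSqrtTwo_sq : invSqrtTwo ^ 2 = 1 / 2 := by
  rw [invSqrtTwo, inv_pow, ← Complex.ofReal_pow, Real.sq_sqrt zero_le_two]
  norm_num

theorem Hmat_eq : Hmat = invSqrtTwo • !![1, 1; 1, -1] := rfl

theorem isScaledIntegral_Hmat : IsScaledIntegral invSqrtTwo Hmat :=
  ⟨1, !![1, 1; 1, -1], by simp [Hmat_eq, ← Matrix.ext_iff, Fin.forall_fin_succ]⟩

theorem isScaledIntegral_Hpow (n : ℕ) : IsScaledIntegral invSqrtTwo (Hpow n) := by
  induction n with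
  | zero => exact .one
  | succ n ih => exact ih.kron2 (c := 1) (d := 1) isScaledIntegral_Hmat

theorem exists_int_eq_exp_mul_I {α : ℝ} (hα : α = 0 ∨ α = Real.pi) :
    ∃ z : ℤ, Complex.exp (α * Complex.I) = z := by
  rcases hα with rfl | rfl
  · exact ⟨1, by simp⟩
  · exact ⟨-1, by simp⟩

theorem isScaledIntegral_Zspider (n m : ℕ) {α : ℝ} (hα : α = 0 ∨ α = Real.pi) :
    IsScaledIntegral invSqrtTwo (Zspider n m α) := by
  obtain ⟨z, hz⟩ := exists_int_eq_exp_mul_I hα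
  refine ⟨0, Matrix.of fun i j =>
    (if (i : ℕ) = 0 ∧ (j : ℕ) = 0 then 1 else 0) +
    (if (i : ℕ) = 2 ^ m - 1 ∧ (j : ℕ) = 2 ^ n - 1 then z else 0), ?_⟩
  ext i j
  simp [Zspider, hz]

theorem ZXpi.isScaledIntegral {n m : ℕ} {M : Matrix (Fin (2 ^ m)) (Fin (2 ^ n)) ℂ}
    (hM : ZXpi n m M) : IsScaledIntegral invSqrtTwo M := by
  induction hM with
  | green n m α hα => exact isScaledIntegral_Zspider n m hα
  | red n m α hα =>
    exact ((isScaledIntegral_Hpow m).mul (isScaledIntegral_Zspider n m hα)).mul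
      (isScaledIntegral_Hpow n)
  | had => exact isScaledIntegral_Hmat
  | triangle => exact ⟨0, !![1, 1; 0, 1], by simp [← Matrix.ext_iff, Fin.forall_fin_succ]⟩
  | swap =>
    exact ⟨0, !![1, 0, 0, 0; 0, 0, 1, 0; 0, 1, 0, 0; 0, 0, 0, 1],
      by simp [← Matrix.ext_iff, Fin.forall_fin_succ]⟩
  | cup => exact ⟨0, !![1, 0, 0, 1], by simp [← Matrix.ext_iff, Fin.forall_fin_succ]⟩
  | cap => exact ⟨0, !![1; 0; 0; 1], by simp [← Matrix.ext_iff, Fin.forall_fin_succ]⟩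
  | wire | empty => exact .one
  | kron _ _ hA hB => exact hA.kron2 hB
  | comp _ _ hA hB => exact hA.mul hB

/-- A type whose elements are labelled by the bit strings of length `width`, a string being encoded
as a number in binary. Indexing matrices by such types instead of `Fin (2 ^ n)` turns the Kronecker
product of `kron2` into `⊗ₖ`. -/
class BitLabelled (ι : Type*) where
  /-- The number of bits. -/
  width : ℕ
  /-- The labelling. -/
  label : ι ≃ Fin (2 ^ width)

open BitLabelled

instance (n : ℕ) : BitLabelled (Fin (2 ^ n)) := ⟨n, Equiv.refl _⟩

instance : BitLabelled (Fin 1) := ⟨0, Equiv.refl _⟩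

instance : BitLabelled (Fin 2) := ⟨1, Equiv.refl _⟩

instance {ι κ : Type*} [BitLabelled ι] [BitLabelled κ] : BitLabelled (ι × κ) where
  width := width ι + width κ
  label := (label.prodCongr label).trans
    (finProdFinEquiv.trans (finCongr (pow_add 2 (width ι) (width κ)).symm))

/-- The finiteness of `ι`. It is not an instance, as it would compete with the one for `Fin`. -/
abbrev BitLabelled.fintype (ι : Type*) [BitLabelled ι] : Fintype ι := .ofEquiv _ label.symm

section Labelled

variable {ι κ l ι' κ' : Type*} [BitLabelled ι] [BitLabelled κ] [BitLabelled l]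
  [BitLabelled ι'] [BitLabelled κ']

theorem label_mk (i : ι) (k : κ) :
    (label (i, k) : ℕ) = label k + 2 ^ width κ * label i := rfl

theorem width_eq_of_equiv (e : ι ≃ κ) : width ι = width κ := by
  have card_eq := Fintype.card_congr ((label.symm.trans e).trans label)
  simpa using card_eq

theorem width_prod : width (ι × κ) = width ι + width κ := rfl

/-- The equivalence `e` does not change the number that encodes a bit string. Such equivalences need
no swap gates. -/
def PreservesLabel (e : ι ≃ κ) : Prop := ∀ i, (label (e i) : ℕ) = label i

namespace PreservesLabel

theorem refl : PreservesLabel (.refl ι) := fun _ => rfl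

theorem symm {e : ι ≃ κ} (he : PreservesLabel e) : PreservesLabel e.symm := fun i => by
  rw [← he, e.apply_symm_apply]

theorem apply_label_symm {e : ι ≃ κ} (he : PreservesLabel e) (x : Fin (2 ^ width ι)) :
    e (label.symm x) = label.symm (Fin.cast (by rw [width_eq_of_equiv e]) x) := by
  rw [Equiv.eq_symm_apply, Fin.ext_iff, he, Equiv.apply_symm_apply, Fin.val_cast]

theorem label : PreservesLabel (label : ι ≃ Fin (2 ^ width ι)) := fun _ => rfl

theorem prodCongr {e : ι ≃ ι'} {f : κ ≃ κ'} (he : PreservesLabel e) (hf : PreservesLabel f) :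
    PreservesLabel (e.prodCongr f) := fun ⟨i, k⟩ => by
  simp [label_mk, he i, hf k, width_eq_of_equiv f]

theorem prodAssoc : PreservesLabel (.prodAssoc ι κ l) := by
  rintro ⟨⟨i, j⟩, k⟩
  rw [Equiv.prodAssoc_apply, label_mk, label_mk, label_mk, label_mk, width_prod]
  ring

theorem prodUnique : PreservesLabel (.prodUnique ι (Fin 1)) := fun ⟨i, k⟩ => by
  have width_fin_one : width (Fin 1) = 0 := rfl
  simp [label_mk, width_fin_one]

theorem uniqueProd : PreservesLabel (.uniqueProd ι (Fin 1)) := fun ⟨k, i⟩ => by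
  simp [label_mk]

end PreservesLabel

/-- The matrix `M`, read as a `2 ^ width κ × 2 ^ width ι` matrix along the labellings, belongs to
the family `ZXpi`. -/
def Representable (M : Matrix κ ι ℂ) : Prop :=
  ZXpi (width ι) (width κ) (Matrix.reindex label label M)

theorem ZXpi.cast {n m n' m' : ℕ} {M : Matrix (Fin (2 ^ m)) (Fin (2 ^ n)) ℂ} (hM : ZXpi n m M)
    (hn : n' = n) (hm : m' = m) :
    ZXpi n' m' (M.submatrix (Fin.cast (by rw [hm])) (Fin.cast (by rw [hn]))) := by
  subst hn hm
  exact hM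

theorem kron2_one (n m : ℕ) : kron2 (1 : Matrix (Fin (2 ^ n)) (Fin (2 ^ n)) ℂ)
    (1 : Matrix (Fin (2 ^ m)) (Fin (2 ^ m)) ℂ) = 1 := by
  rw [kron2, Matrix.one_kronecker_one]
  exact Matrix.submatrix_one_equiv _

theorem ZXpi.one (n : ℕ) : ZXpi n n 1 := by
  induction n with
  | zero => exact .empty
  | succ n ih => exact kron2_one n 1 ▸ ih.kron .wire

theorem ZXpi.representable_submatrix {M : Matrix (Fin (2 ^ width κ)) (Fin (2 ^ width ι)) ℂ}
    (hM : ZXpi (width ι) (width κ) M) : Representable (M.submatrix label label) := by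
  simpa [Representable] using hM

namespace Representable

theorem one [DecidableEq ι] : Representable (1 : Matrix ι ι ℂ) := by
  simpa [Representable] using ZXpi.one (width ι)

theorem mul [Fintype l] {A : Matrix κ l ℂ} {B : Matrix l ι ℂ} (hA : Representable A)
    (hB : Representable B) : Representable (A * B) := by
  simpa [Representable, Matrix.submatrix_mul_equiv] using hA.comp hB

theorem kronecker {A : Matrix κ ι ℂ} {B : Matrix κ' ι' ℂ} (hA : Representable A)
    (hB : Representable B) : Representable (A ⊗ₖ B) :=
  hA.kron hB

theorem submatrix {A : Matrix κ ι ℂ} (hA : Representable A) {f : κ' ≃ κ} {e : ι' ≃ ι}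
    (hf : PreservesLabel f) (he : PreservesLabel e) : Representable (A.submatrix f e) := by
  have reindex_eq : Matrix.reindex label label (A.submatrix f e) =
      (Matrix.reindex label label A).submatrix
        (Fin.cast (by rw [width_eq_of_equiv f])) (Fin.cast (by rw [width_eq_of_equiv e])) := by
    ext i j
    exact congrArg₂ A (hf.apply_label_symm i) (he.apply_label_symm j)
  rw [Representable, reindex_eq]
  exact hA.cast (width_eq_of_equiv e) (width_eq_of_equiv f)

theorem smul {z : ℂ} {A : Matrix κ ι ℂ} (hA : Representable A) (hz : Representable !![z]) :
    Representable (z • A) := by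
  convert (hA.kronecker hz).submatrix PreservesLabel.prodUnique.symm PreservesLabel.prodUnique.symm
    using 1
  ext i j
  simp [mul_comm]

end Representable

end Labelled

/-- The tensor `|00⟩⟨0| + |11⟩⟨1|`. -/
def copyTensor : Matrix (Fin 2 × Fin 2) (Fin 2) ℂ :=
  Matrix.of fun p c => if p.1 = c ∧ p.2 = c then 1 else 0

/-- The tensor `(|00⟩ + |11⟩)⟨0| + (|01⟩ + |10⟩)⟨1|`; the sum in `Fin 2` is exclusive or. -/
def xorTensor : Matrix (Fin 2 × Fin 2) (Fin 2) ℂ :=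
  Matrix.of fun p c => if p.1 + p.2 = c then 1 else 0

/-- The unnormalised W tensor `|00⟩⟨0| + (|01⟩ + |10⟩)⟨1|`; the sum is in `ℕ`. -/
def wTensor : Matrix (Fin 2 × Fin 2) (Fin 2) ℂ :=
  Matrix.of fun p c => if (p.1 + p.2 : ℕ) = c then 1 else 0

theorem Hmat_mul_pauliZ_mul_Hmat : Hmat * !![1, 0; 0, -1] * Hmat = !![0, 1; 1, 0] := by
  have unnormalised : (!![1, 1; 1, -1] * !![1, 0; 0, -1] * !![1, 1; 1, -1] :
      Matrix (Fin 2) (Fin 2) ℂ) = (2 : ℂ) • !![0, 1; 1, 0] := by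
    norm_num
  rw [Hmat_eq, Matrix.smul_mul, Matrix.smul_mul, Matrix.mul_smul, smul_smul, unnormalised,
    smul_smul, ← sq, invSqrtTwo_sq, one_div_mul_cancel two_ne_zero, one_smul]

theorem Hmat_kronecker_Hmat_mul_copyTensor_mul_Hmat :
    (Hmat ⊗ₖ Hmat) * copyTensor * Hmat = invSqrtTwo • xorTensor := by
  have unnormalised : ((!![1, 1; 1, -1] : Matrix (Fin 2) (Fin 2) ℂ) ⊗ₖ
      (!![1, 1; 1, -1] : Matrix (Fin 2) (Fin 2) ℂ)) * copyTensor *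
      (!![1, 1; 1, -1] : Matrix (Fin 2) (Fin 2) ℂ) = (2 : ℂ) • xorTensor := by
    ext ⟨a, b⟩ c
    fin_cases a <;> fin_cases b <;> fin_cases c <;>
      simp [Matrix.mul_apply, copyTensor, xorTensor, Fintype.sum_prod_type, one_add_one_eq_two]
  simp only [Hmat_eq, Matrix.smul_kronecker, Matrix.kronecker_smul, Matrix.smul_mul,
    Matrix.mul_smul, smul_smul, unnormalised]
  congr 1
  linear_combination 2 * invSqrtTwo * invSqrtTwo_sq

-- `a + b = c` in `ℕ` if and only if `a ≤ c` and `a ⊕ b = c`; the triangle is the matrix of `≤`.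
theorem wTensor_eq : wTensor = (copyTensorᵀ ⊗ₖ (1 : Matrix (Fin 2) (Fin 2) ℂ)) *
    ((!![1, 1; 0, 1] : Matrix (Fin 2) (Fin 2) ℂ) ⊗ₖ xorTensor).submatrix
      (Equiv.prodAssoc _ _ _) (Equiv.refl _) * copyTensor := by
  ext ⟨a, b⟩ c
  fin_cases a <;> fin_cases b <;> fin_cases c <;>
    simp [Matrix.mul_apply, Matrix.one_apply, copyTensor, xorTensor, wTensor,
      Fintype.sum_prod_type]

theorem representable_Hmat : Representable Hmat := ZXpi.had

theorem representable_triangle : Representable !![1, 1; 0, 1] := ZXpi.triangle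

theorem representable_greenDiag {α : ℝ} (hα : α = 0 ∨ α = Real.pi) :
    Representable !![1, 0; 0, Complex.exp (α * Complex.I)] := by
  convert (ZXpi.green 1 1 α hα).representable_submatrix (ι := Fin 2) (κ := Fin 2)
  ext i j
  fin_cases i <;> fin_cases j <;> simp [Zspider, label]

theorem representable_greenRow {α : ℝ} (hα : α = 0 ∨ α = Real.pi) :
    Representable !![1, Complex.exp (α * Complex.I)] := by
  convert (ZXpi.green 1 0 α hα).representable_submatrix (ι := Fin 2) (κ := Fin 1)
  ext i j
  fin_cases i; fin_cases j <;> simp [Zspider, label]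

theorem representable_greenCol {α : ℝ} (hα : α = 0 ∨ α = Real.pi) :
    Representable !![1; Complex.exp (α * Complex.I)] := by
  convert (ZXpi.green 0 1 α hα).representable_submatrix (ι := Fin 1) (κ := Fin 2)
  ext i j
  fin_cases j; fin_cases i <;> simp [Zspider, label]

theorem representable_two : Representable !![2] := by
  convert (ZXpi.green 0 0 0 (.inl rfl)).representable_submatrix (ι := Fin 1) (κ := Fin 1)
  ext i j
  fin_cases i; fin_cases j; norm_num [Zspider, label]

theorem val_label_fin_two_prod (a b : Fin 2) : (label (a, b) : ℕ) = b + 2 * a := rfl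

theorem representable_copyTensor : Representable copyTensor := by
  convert (ZXpi.green 1 2 0 (.inl rfl)).representable_submatrix (ι := Fin 2) (κ := Fin 2 × Fin 2)
  ext ⟨a, b⟩ c
  simp only [Zspider, Matrix.submatrix_apply, Matrix.of_apply, val_label_fin_two_prod]
  fin_cases a <;> fin_cases b <;> fin_cases c <;> simp [label, copyTensor]

theorem representable_transpose_copyTensor : Representable copyTensorᵀ := by
  convert (ZXpi.green 2 1 0 (.inl rfl)).representable_submatrix (ι := Fin 2 × Fin 2) (κ := Fin 2)
  ext c ⟨a, b⟩
  simp only [Zspider, Matrix.submatrix_apply, Matrix.of_apply, val_label_fin_two_prod]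
  fin_cases a <;> fin_cases b <;> fin_cases c <;> simp [label, copyTensor]

theorem representable_swap :
    Representable ((1 : Matrix (Fin 2 × Fin 2) (Fin 2 × Fin 2) ℂ).submatrix id Prod.swap) := by
  convert ZXpi.swap.representable_submatrix (ι := Fin 2 × Fin 2) (κ := Fin 2 × Fin 2)
  ext ⟨a, b⟩ ⟨c, d⟩
  fin_cases a <;> fin_cases b <;> fin_cases c <;> fin_cases d <;> rfl

theorem representable_pauliZ : Representable !![1, 0; 0, -1] := by
  simpa using representable_greenDiag (.inr rfl)

theorem representable_pauliX : Representable !![0, 1; 1, 0] :=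
  Hmat_mul_pauliZ_mul_Hmat ▸ (representable_Hmat.mul representable_pauliZ).mul representable_Hmat

theorem representable_transpose_triangle : Representable !![1, 0; 1, 1] := by
  simpa using (representable_pauliX.mul representable_triangle).mul representable_pauliX

theorem representable_row_one_one : Representable !![1, 1] := by
  simpa using representable_greenRow (.inl rfl)

theorem representable_row_one_neg_one : Representable !![1, -1] := by
  simpa using representable_greenRow (.inr rfl)

theorem representable_row_one_zero : Representable !![1, 0] := by
  simpa using representable_row_one_neg_one.mul representable_triangle

theorem representable_col_one_one : Representable !![1; 1] := by
  simpa using representable_greenCol (.inl rfl)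

theorem representable_col_zero_one : Representable !![0; 1] := by
  have col_one_neg_one : Representable !![1; -1] := by
    simpa using representable_greenCol (.inr rfl)
  simpa using representable_pauliZ.mul (representable_triangle.mul col_one_neg_one)

theorem representable_invSqrtTwo : Representable !![invSqrtTwo] := by
  simpa [Hmat_eq] using
    representable_row_one_zero.mul (representable_Hmat.mul representable_col_zero_one)

theorem representable_xorTensor : Representable xorTensor := by
  have scaled : Representable (invSqrtTwo • xorTensor) :=
    Hmat_kronecker_Hmat_mul_copyTensor_mul_Hmat ▸
      ((representable_Hmat.kronecker representable_Hmat).mul representable_copyTensor).mul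
        representable_Hmat
  have rescale : 2 * invSqrtTwo * invSqrtTwo = 1 := by
    linear_combination 2 * invSqrtTwo_sq
  simpa [smul_smul, ← mul_assoc, rescale] using
    (scaled.smul representable_invSqrtTwo).smul representable_two

theorem representable_wTensor : Representable wTensor := by
  rw [wTensor_eq]
  exact ((representable_transpose_copyTensor.kronecker .one).mul
    ((representable_triangle.kronecker representable_xorTensor).submatrix .prodAssoc .refl)).mul
      representable_copyTensor

theorem ZXpi.kron_ones {n₁ m₁ n₂ m₂ : ℕ} (h₁ : ZXpi n₁ m₁ (Matrix.of fun _ _ => 1))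
    (h₂ : ZXpi n₂ m₂ (Matrix.of fun _ _ => 1)) :
    ZXpi (n₁ + n₂) (m₁ + m₂) (Matrix.of fun _ _ => 1) := by
  convert h₁.kron h₂
  ext
  simp [kron2]

theorem ZXpi.ones (n m : ℕ) : ZXpi n m (Matrix.of fun _ _ => 1) := by
  have row : Representable (Matrix.of fun (_ : Fin 1) (_ : Fin 2) => 1) := by
    convert representable_row_one_one using 1
    ext i j
    fin_cases i; fin_cases j <;> rfl
  have col : Representable (Matrix.of fun (_ : Fin 2) (_ : Fin 1) => 1) := by
    convert representable_col_one_one using 1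
    ext i j
    fin_cases j; fin_cases i <;> rfl
  induction m with
  | zero =>
    induction n with
    | zero =>
      convert ZXpi.empty
      ext i j
      fin_cases i; fin_cases j; rfl
    | succ n ih => exact ih.kron_ones row
  | succ m ih => exact ih.kron_ones col

theorem representable_ones {ι κ : Type*} [BitLabelled ι] [BitLabelled κ] :
    Representable (Matrix.of fun (_ : κ) (_ : ι) => (1 : ℂ)) :=
  ZXpi.ones _ _

section Controlled

/-- The matrix `∑ k d, v k ^ d • |k⟩⟨k d|`. It puts the row vector `(1, v k)` on the last bit, with
control `k`. -/
def controlled {ι : Type*} [DecidableEq ι] (v : ι → ℂ) : Matrix ι (ι × Fin 2) ℂ :=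
  Matrix.of fun k p => if k = p.1 then v k ^ (p.2 : ℕ) else 0

variable {ι κ : Type*} [DecidableEq ι] [DecidableEq κ] [BitLabelled ι] [BitLabelled κ]

theorem Representable.controlled_comp {v : ι → ℂ} (hv : Representable (controlled v)) {e : κ ≃ ι}
    (he : PreservesLabel e) : Representable (controlled (v ∘ e)) := by
  convert hv.submatrix he (he.prodCongr .refl)
  ext i ⟨j, d⟩
  simp [controlled]

theorem Representable.controlled_const {z : ℂ} (hz : Representable !![1, z]) :
    Representable (controlled (Function.const ι z)) := by
  convert (one.kronecker hz).submatrix (PreservesLabel.prodUnique (ι := ι)).symm .refl using 1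
  ext i ⟨j, d⟩
  fin_cases d <;> simp [controlled, Matrix.one_apply]

theorem Representable.controlled_of_tensor {u v w : ι → ℂ}
    {G : Matrix (Fin 2 × Fin 2) (Fin 2) ℂ} (hv : Representable (controlled v))
    (hw : Representable (controlled w)) (hG : Representable G)
    (hu : ∀ i c, ∑ a : Fin 2, ∑ b : Fin 2, v i ^ (a : ℕ) * w i ^ (b : ℕ) * G (a, b) c =
      u i ^ (c : ℕ)) :
    Representable (controlled u) := by
  have := fintype ι
  convert (hw.mul (hv.kronecker one)).mul ((kronecker (one (ι := ι)) hG).submatrix .prodAssoc .refl)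
    using 1
  ext i ⟨j, c⟩
  obtain rfl | hij := eq_or_ne i j
  · simp [controlled, ← hu, Matrix.mul_apply, Fintype.sum_prod_type, Matrix.one_apply,
      mul_comm (w i)]
  · simp [controlled, Matrix.mul_apply, Fintype.sum_prod_type, Matrix.one_apply, hij]

theorem Representable.controlled_add {v w : ι → ℂ} (hv : Representable (controlled v))
    (hw : Representable (controlled w)) : Representable (controlled (v + w)) := by
  refine hv.controlled_of_tensor hw representable_wTensor fun i c => ?_
  fin_cases c <;> simp [wTensor, add_comm]

theorem Representable.controlled_mul {v w : ι → ℂ} (hv : Representable (controlled v))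
    (hw : Representable (controlled w)) : Representable (controlled (v * w)) := by
  refine hv.controlled_of_tensor hw representable_copyTensor fun i c => ?_
  fin_cases c <;> simp [copyTensor]

theorem Representable.controlled_fst {v : ι → ℂ} (hv : Representable (controlled v)) :
    Representable (controlled fun p : ι × Fin 2 => v p.1) := by
  have := fintype ι
  convert (hv.kronecker (one (ι := Fin 2))).mul
    (((one (ι := ι)).kronecker representable_swap).submatrix .prodAssoc .prodAssoc)
  ext ⟨i, b⟩ ⟨⟨j, c⟩, d⟩
  by_cases hij : i = j <;>
    simp [controlled, Matrix.mul_apply, Matrix.one_apply, Fintype.sum_prod_type, ite_and, hij]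

theorem Representable.controlled_snd {v : κ → ℂ} (hv : Representable (controlled v)) :
    Representable (controlled fun p : ι × κ => v p.2) := by
  convert ((one (ι := ι)).kronecker hv).submatrix .refl .prodAssoc using 1
  ext ⟨i, b⟩ ⟨⟨j, c⟩, d⟩
  by_cases hij : i = j <;> simp [controlled, hij]

theorem representable_controlled_bit : Representable (controlled fun b : Fin 2 => (b : ℂ)) := by
  convert representable_transpose_copyTensor.mul
    (Representable.one.kronecker representable_transpose_triangle) using 1
  ext i ⟨j, d⟩
  fin_cases i <;> fin_cases j <;> fin_cases d <;>
    simp [controlled, copyTensor, Matrix.mul_apply, Fintype.sum_prod_type]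

end Controlled

/-- The subring of those `v` for which `controlled v` is representable. -/
def controllable (ι : Type*) [BitLabelled ι] [DecidableEq ι] : Subring (ι → ℂ) where
  carrier := {v | Representable (controlled v)}
  mul_mem' := Representable.controlled_mul
  one_mem' := .controlled_const representable_row_one_one
  add_mem' := Representable.controlled_add
  zero_mem' := .controlled_const representable_row_one_zero
  neg_mem' {v} hv := by
    have neg_eq : Function.const ι (-1) * v = -v := by
      ext
      simp
    exact neg_eq ▸ (Representable.controlled_const representable_row_one_neg_one).controlled_mul hv

theorem mem_controllable_prod_fin_two {ι : Type*} [BitLabelled ι] [DecidableEq ι]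
    {v : ι × Fin 2 → ℂ} (h₀ : (fun i => v (i, 0)) ∈ controllable ι)
    (h₁ : (fun i => v (i, 1)) ∈ controllable ι) : v ∈ controllable (ι × Fin 2) := by
  have mem_zero : (fun p => v (p.1, 0)) ∈ controllable (ι × Fin 2) :=
    Representable.controlled_fst h₀
  have mem_one : (fun p => v (p.1, 1)) ∈ controllable (ι × Fin 2) :=
    Representable.controlled_fst h₁
  have mem_bit : (fun p => (p.2 : ℂ)) ∈ controllable (ι × Fin 2) :=
    representable_controlled_bit.controlled_snd
  have interpolate : v = (fun p => v (p.1, 0)) +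
      (fun p => (p.2 : ℂ)) * ((fun p => v (p.1, 1)) - fun p => v (p.1, 0)) := by
    ext ⟨i, b⟩
    fin_cases b <;> simp
  rw [interpolate]
  exact add_mem mem_zero (mul_mem mem_bit (sub_mem mem_one mem_zero))

theorem intCast_mem_controllable_fin (n : ℕ) (v : Fin (2 ^ n) → ℤ) :
    (fun i => (v i : ℂ)) ∈ controllable (Fin (2 ^ n)) := by
  induction n with
  | zero =>
    have v_const : (fun i => (v i : ℂ)) = ((v 0 : ℤ) : Fin (2 ^ 0) → ℂ) := by
      ext i
      fin_cases i
      rfl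
    exact v_const ▸ intCast_mem _ _
  | succ n ih =>
    let w (p : Fin (2 ^ n) × Fin 2) : ℂ := v (label p)
    have hw : w ∈ controllable (Fin (2 ^ n) × Fin 2) :=
      mem_controllable_prod_fin_two (ih fun i => v (label (i, (0 : Fin 2))))
        (ih fun i => v (label (i, (1 : Fin 2))))
    have w_comp : w ∘ label.symm = fun i => (v i : ℂ) := by
      ext i
      exact congrArg (fun x => (v x : ℂ)) (label.apply_symm_apply i)
    exact w_comp ▸ Representable.controlled_comp hw PreservesLabel.label.symm

section IntegerMatrices

variable {ι κ : Type*} [BitLabelled ι] [BitLabelled κ]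

theorem intCast_mem_controllable [DecidableEq ι] (v : ι → ℤ) :
    (fun i => (v i : ℂ)) ∈ controllable ι := by
  have transferred : (fun x => (v (label.symm x) : ℂ)) ∘ label ∈ controllable ι :=
    Representable.controlled_comp (intCast_mem_controllable_fin _ fun x => v (label.symm x)) .label
  simpa [Function.comp_def] using transferred

namespace Representable

theorem of_controlled [DecidableEq ι] [DecidableEq κ] {v : κ × ι → ℂ}
    (hv : Representable (controlled v)) : Representable (Matrix.of fun i j => v (i, j)) := by
  have := fintype ι
  have := fintype κ
  have discard : Representable (Matrix.of fun i (p : κ × ι) => if i = p.1 then (1 : ℂ) else 0) := by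
    convert ((one (ι := κ)).kronecker (representable_ones (ι := ι) (κ := Fin 1))).submatrix
      PreservesLabel.prodUnique.symm .refl using 1
    ext i p
    simp [Matrix.one_apply]
  have prepare : Representable
      (Matrix.of fun (p : (κ × ι) × Fin 2) j => if p.1.2 = j ∧ p.2 = 1 then (1 : ℂ) else 0) := by
    convert ((((representable_ones (ι := Fin 1) (κ := κ)).kronecker (one (ι := ι))).kronecker
      representable_col_zero_one).submatrix .refl PreservesLabel.prodUnique.symm).submatrix .refl
        PreservesLabel.uniqueProd.symm using 1
    ext ⟨p, c⟩ j
    fin_cases c <;> simp [Matrix.one_apply]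
  convert (discard.mul hv).mul prepare using 1
  ext i j
  simp [Matrix.mul_apply, controlled, Fintype.sum_prod_type, ite_and]

theorem map_intCast (A : Matrix κ ι ℤ) : Representable (A.map fun z => (z : ℂ)) := by
  classical
  exact of_controlled (v := fun p => (A p.1 p.2 : ℂ))
    (intCast_mem_controllable fun p : κ × ι => A p.1 p.2)

theorem of_isScaledIntegral {M : Matrix κ ι ℂ} (hM : IsScaledIntegral invSqrtTwo M) :
    Representable M := by
  obtain ⟨k, A, rfl⟩ := hM
  induction k with
  | zero => simpa using map_intCast A
  | succ k ih => simpa [pow_succ', mul_smul] using ih.smul representable_invSqrtTwo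

end Representable

end IntegerMatrices

theorem zxpi_iff_isScaledIntegral {n m : ℕ} {M : Matrix (Fin (2 ^ m)) (Fin (2 ^ n)) ℂ} :
    ZXpi n m M ↔ IsScaledIntegral invSqrtTwo M :=
  ⟨ZXpi.isScaledIntegral, Representable.of_isScaledIntegral⟩

theorem dyadic_subset_zxpi_and_exact (n m : ℕ) :
    (∀ (k : ℕ) (A : Matrix (Fin (2 ^ m)) (Fin (2 ^ n)) ℤ),
      ZXpi n m ((((Real.sqrt 2 : ℝ) : ℂ)⁻¹ ^ k) • A.map (fun z => (z : ℂ)))) ∧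
    (∀ M : Matrix (Fin (2 ^ m)) (Fin (2 ^ n)) ℂ,
      ZXpi n m M ↔ ∃ (k : ℕ) (A : Matrix (Fin (2 ^ m)) (Fin (2 ^ n)) ℤ),
        M = (((Real.sqrt 2 : ℝ) : ℂ)⁻¹ ^ k) • A.map (fun z => (z : ℂ))) :=
  ⟨fun k A => zxpi_iff_isScaledIntegral.mpr ⟨k, A, rfl⟩, fun _ => zxpi_iff_isScaledIntegral⟩
end
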